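/- arXiv:1805.06127 — 5 statements merged into one kernel-verified Lean document; each statement's English description precedes it below -/
import Mathlib

section
/- Let (Ω, 𝒫) be a probability space, let A_1, …, A_m be measurable events, and let p ∈ [0,1] be such that for every subset T ⊆ {1, …, m} one has 𝒫(⋂_{i∈T} A_i) ≤ p^{|T|}. Then for every natural number S ≥ 1, the probability that at least S of the events A_1, …, A_m occur satisfies 𝒫({ω : #{i : ω ∈ A_i} ≥ S}) ≤ (m·p)^S / S!. -/
/-!
If at least `S` of the events occur, then some `S`-element subfamily occurs in full. A union bound
over the `m.choose S` such subfamilies, each of probability at most `p ^ S`, together with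
`m.choose S ≤ m ^ S / S!` (`Nat.choose_le_pow_div`), gives the estimate.
-/

open MeasureTheory

open scoped Classical in
/-- **Tail bound for counts of correlated events.**
Let `(Ω, P)` be a probability space, `A_1, …, A_m` measurable events, and `p ∈ [0,1]`
such that for every `T ⊆ {1, …, m}` one has `P(⋂_{i ∈ T} A_i) ≤ p^{|T|}`.  Then for every
natural number `S ≥ 1`, the probability that at least `S` of the events occur is at most
`(m·p)^S / S!`. -/
theorem prob_atLeast_le_of_inter_le {Ω : Type*} [MeasurableSpace Ω]
    (P : Measure Ω) [IsProbabilityMeasure P]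
    (m : ℕ) (A : Fin m → Set Ω) (hA : ∀ i, MeasurableSet (A i))
    (p : ℝ) (hp0 : 0 ≤ p) (hp1 : p ≤ 1)
    (hinter : ∀ T : Finset (Fin m),
      P (⋂ i ∈ T, A i) ≤ ENNReal.ofReal (p ^ T.card))
    (S : ℕ) (hS : 1 ≤ S) :
    P {ω | S ≤ (Finset.univ.filter fun i => ω ∈ A i).card}
      ≤ ENNReal.ofReal ((m * p) ^ S / Nat.factorial S) := by
  have hsub : {ω | S ≤ (Finset.univ.filter fun i => ω ∈ A i).card} ⊆
      ⋃ T ∈ Finset.powersetCard S (Finset.univ : Finset (Fin m)), ⋂ i ∈ T, A i := by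
    intro ω hω
    obtain ⟨T, hT, hcard⟩ := Finset.exists_subset_card_eq (Set.mem_setOf_eq ▸ hω)
    simp only [Set.mem_iUnion, Set.mem_iInter]
    exact ⟨T, Finset.mem_powersetCard.2 ⟨Finset.subset_univ _, hcard⟩,
      fun i hi => (Finset.mem_filter.1 (hT hi)).2⟩
  calc P {ω | S ≤ (Finset.univ.filter fun i => ω ∈ A i).card}
      ≤ P (⋃ T ∈ Finset.powersetCard S (Finset.univ : Finset (Fin m)), ⋂ i ∈ T, A i) :=
        measure_mono hsub
    _ ≤ ∑ T ∈ Finset.powersetCard S (Finset.univ : Finset (Fin m)), P (⋂ i ∈ T, A i) :=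
        measure_biUnion_finset_le _ _
    _ ≤ ∑ _T ∈ Finset.powersetCard S (Finset.univ : Finset (Fin m)), ENNReal.ofReal (p ^ S) :=
        Finset.sum_le_sum fun T hT => (Finset.mem_powersetCard.1 hT).2 ▸ hinter T
    _ = ENNReal.ofReal (m.choose S * p ^ S) := by
        rw [Finset.sum_const, Finset.card_powersetCard, Finset.card_univ, Fintype.card_fin,
          ← ENNReal.ofReal_nsmul, nsmul_eq_mul]
    _ ≤ ENNReal.ofReal ((m * p) ^ S / Nat.factorial S) := by
        apply ENNReal.ofReal_le_ofReal
        rw [mul_pow, mul_div_right_comm]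
        exact mul_le_mul_of_nonneg_right (Nat.choose_le_pow_div S m) (pow_nonneg hp0 S)
end

section
/- Let (Ω, 𝒫) be a probability space, let A_1, …, A_m be measurable events, and let p ∈ [0,1] be such that for every subset T ⊆ {1, …, m} one has 𝒫(⋂_{i∈T} A_i) ≤ p^{|T|}, and suppose m·p ≤ 1. Then for every natural number S ≥ 6, the probability that at least S of the events A_1, …, A_m occur is at most e^{−S}. -/
/-!
If at least `S` of the events occur at `ω`, then all events of some index set `T` with `|T| = S`
occur at `ω`. The union bound over the `m.choose S` such sets gives the bound
`m.choose S * p ^ S ≤ (m * p) ^ S / S! ≤ 1 / S!`, and `exp S ≤ S!` for `S ≥ 6`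
(`exp_le_factorial`).
-/

open MeasureTheory

/-- The threshold `6` is sharp: `exp 5 > 120 = 5!`. -/
lemma exp_le_factorial {S : ℕ} (hS : 6 ≤ S) : Real.exp S ≤ (S.factorial : ℝ) := by
  have he : Real.exp 1 < 2.8 := Real.exp_one_lt_d9.trans (by norm_num)
  induction S, hS using Nat.le_induction with
  | base =>
    calc Real.exp ((6 : ℕ) : ℝ) = Real.exp 1 ^ 6 := by rw [← Real.exp_nat_mul]; simp
      _ ≤ 2.8 ^ 6 := by gcongr
      _ ≤ _ := by norm_num [Nat.factorial]
  | succ n hn ih =>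
    have hn' : (6 : ℝ) ≤ n := by exact_mod_cast hn
    rw [Nat.factorial_succ]
    push_cast
    rw [Real.exp_add, mul_comm]
    gcongr
    linarith

/-- The elementary bound `m.choose S * p ^ S ≤ (m * p) ^ S / S!`, specialised to `m * p ≤ 1`. -/
lemma choose_mul_pow_le_inv_factorial {m S : ℕ} {p : ℝ} (hp0 : 0 ≤ p) (hmp : (m : ℝ) * p ≤ 1) :
    (m.choose S : ℝ) * p ^ S ≤ (S.factorial : ℝ)⁻¹ := by
  calc (m.choose S : ℝ) * p ^ S ≤ (m : ℝ) ^ S / S.factorial * p ^ S := by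
        gcongr
        exact Nat.choose_le_pow_div S m
    _ = ((m : ℝ) * p) ^ S * (S.factorial : ℝ)⁻¹ := by rw [mul_pow]; ring
    _ ≤ 1 * (S.factorial : ℝ)⁻¹ := by
        gcongr
        exact pow_le_one₀ (by positivity) hmp
    _ = _ := one_mul _

open scoped Classical in
/-- **Exponential tail bound for counts of correlated events.**
Let `(Ω, P)` be a probability space, `A_1, …, A_m` measurable events, and `p ∈ [0,1]`
such that for every `T ⊆ {1, …, m}` one has `P(⋂_{i ∈ T} A_i) ≤ p^{|T|}`, and suppose
`m·p ≤ 1`.  Then for every natural number `S ≥ 6`, the probability that at least `S` of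
the events occur is at most `e^{−S}`. -/
theorem prob_atLeast_le_exp_neg {Ω : Type*} [MeasurableSpace Ω]
    (P : Measure Ω) [IsProbabilityMeasure P]
    (m : ℕ) (A : Fin m → Set Ω) (hA : ∀ i, MeasurableSet (A i))
    (p : ℝ) (hp0 : 0 ≤ p) (hp1 : p ≤ 1) (hmp : (m : ℝ) * p ≤ 1)
    (hinter : ∀ T : Finset (Fin m),
      P (⋂ i ∈ T, A i) ≤ ENNReal.ofReal (p ^ T.card))
    (S : ℕ) (hS : 6 ≤ S) :
    P {ω | S ≤ (Finset.univ.filter fun i => ω ∈ A i).card}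
      ≤ ENNReal.ofReal (Real.exp (-(S : ℝ))) := by
  have hsub : {ω | S ≤ (Finset.univ.filter fun i => ω ∈ A i).card} ⊆
      ⋃ T ∈ (Finset.univ : Finset (Fin m)).powersetCard S, ⋂ i ∈ T, A i := by
    intro ω hω
    obtain ⟨T, hT, hcard⟩ := Finset.exists_subset_card_eq hω
    simp only [Set.mem_iUnion, Set.mem_iInter]
    exact ⟨T, Finset.mem_powersetCard.2 ⟨Finset.subset_univ T, hcard⟩,
      fun i hi => (Finset.mem_filter.1 (hT hi)).2⟩
  calc P {ω | S ≤ (Finset.univ.filter fun i => ω ∈ A i).card}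
      ≤ P (⋃ T ∈ (Finset.univ : Finset (Fin m)).powersetCard S, ⋂ i ∈ T, A i) :=
        measure_mono hsub
    _ ≤ ∑ T ∈ (Finset.univ : Finset (Fin m)).powersetCard S, P (⋂ i ∈ T, A i) :=
        measure_biUnion_finset_le _ _
    _ ≤ ∑ T ∈ (Finset.univ : Finset (Fin m)).powersetCard S, ENNReal.ofReal (p ^ S) := by
        refine Finset.sum_le_sum fun T hT => ?_
        rw [← (Finset.mem_powersetCard.1 hT).2]
        exact hinter T
    _ = ENNReal.ofReal ((m.choose S : ℝ) * p ^ S) := by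
        rw [Finset.sum_const, Finset.card_powersetCard, Finset.card_fin, ← nsmul_eq_mul,
          ENNReal.ofReal_nsmul]
    _ ≤ ENNReal.ofReal (Real.exp (-(S : ℝ))) := by
        refine ENNReal.ofReal_le_ofReal ((choose_mul_pow_le_inv_factorial hp0 hmp).trans ?_)
        rw [Real.exp_neg]
        exact inv_anti₀ (Real.exp_pos _) (exp_le_factorial hS)
end

section
/- For every integer n ≥ 3 there is a constant C(n) > 0 with the following property. For every R ≥ 2 and every point p ∈ ℝⁿ, if x and y are independent random points each distributed according to the uniform probability measure on the sphere S_R = {x ∈ ℝⁿ : ‖x‖ = R}, then the probability that the segment [x, y] (the convex hull of {x, y}) comes within distance 1 of p, i.e., that inf_{z ∈ [x,y]} ‖z − p‖ ≤ 1, is at most C(n)·R^{1−n}. -/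
/-!
Let `m = n - 1`, let `σ` be the uniform measure on the sphere `S_R`, and put `d = ‖x - p‖`.

By symmetry in `x` and `y` it suffices to treat pairs for which `y` is the endpoint closer to `p`,
that is `‖y - p‖ ≤ d`. Fix `x`. If `[x, y]` meets the unit ball around `p` and `d ≥ 2`, then
`‖x - y‖` is comparable to `d`, so `y` lies within `4` of the line `xp`. The equation `‖y‖ = R`
moreover confines `y` to a portion of this tube of length `O(R / d)` around the second intersection
of the line with the sphere (`near_endpoint`). This portion is covered by `O(R / d)` balls of
radius `5`, each of mass `O(R ^ (-m))` by the cap estimate `sphereUniform_cap`. Hence the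
conditional probability given `x` is `O(R ^ (-m) * R / d)` (`sphereUniform_near_endpoint`), and
it remains to see that the mean of `R / d` is bounded, which follows from the cap estimate by
dyadic summation because `m ≥ 2` (`lintegral_inv_dist`).

The cap estimate does not use the value of the Hausdorff measure of the sphere: all balls of radius
`r` centred on `S_R` have equal mass because reflections preserve `σ`, and averaging the mass of
balls over a shell of thickness `r` bounds that common mass in terms of Lebesgue volumes.
If the Hausdorff measure of the sphere were zero or infinite, `σ` would be the zero measure by the
conventions for `⁻¹` and `*` in `ℝ≥0∞`, so `σ univ ≤ 1` holds without computing it.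
-/

open MeasureTheory

/-- The uniform probability measure on the sphere `S_R = {x ∈ ℝⁿ : ‖x‖ = R}`:
the normalized `(n−1)`-dimensional (spherical) Hausdorff measure on `S_R`. -/
noncomputable def sphereUniform (n : ℕ) (R : ℝ) :
    Measure (EuclideanSpace ℝ (Fin n)) :=
  (((Measure.hausdorffMeasure ((n : ℝ) - 1)).restrict
      (Metric.sphere (0 : EuclideanSpace ℝ (Fin n)) R)) Set.univ)⁻¹ •
    ((Measure.hausdorffMeasure ((n : ℝ) - 1)).restrict
      (Metric.sphere (0 : EuclideanSpace ℝ (Fin n)) R))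

/-! ### The uniform measure and the cap estimate -/

lemma sphereUniform_apply (n : ℕ) (R : ℝ) {s : Set (EuclideanSpace ℝ (Fin n))}
    (hs : MeasurableSet s) :
    sphereUniform n R s =
      (((Measure.hausdorffMeasure ((n : ℝ) - 1)).restrict
        (Metric.sphere (0 : EuclideanSpace ℝ (Fin n)) R)) Set.univ)⁻¹ *
      Measure.hausdorffMeasure ((n : ℝ) - 1) (s ∩ Metric.sphere 0 R) := by
  simp [sphereUniform, Measure.restrict_apply hs]

lemma sphereUniform_univ_le (n : ℕ) (R : ℝ) : sphereUniform n R Set.univ ≤ 1 := by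
  rw [sphereUniform, Measure.smul_apply, smul_eq_mul]
  exact ENNReal.inv_mul_le_one _

instance sphereUniform_finite (n : ℕ) (R : ℝ) : IsFiniteMeasure (sphereUniform n R) :=
  ⟨(sphereUniform_univ_le n R).trans_lt ENNReal.one_lt_top⟩

lemma sphereUniform_ae_norm (n : ℕ) (R : ℝ) : ∀ᵐ x ∂(sphereUniform n R), ‖x‖ = R := by
  have h : MeasurableSet {x : EuclideanSpace ℝ (Fin n) | ‖x‖ = R} :=
    (isClosed_eq continuous_norm continuous_const).measurableSet
  rw [ae_iff]
  change sphereUniform n R {x | ‖x‖ = R}ᶜ = 0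
  rw [sphereUniform_apply n R h.compl]
  have : {x : EuclideanSpace ℝ (Fin n) | ‖x‖ = R}ᶜ ∩ Metric.sphere 0 R = ∅ := by
    ext x; simp
  rw [this]; simp

/-- Two balls of equal radius centred on the sphere have equal mass: the reflection exchanging
the two centres is an isometry preserving the sphere. -/
lemma sphereUniform_closedBall_eq (n : ℕ) (R r : ℝ) {x y : EuclideanSpace ℝ (Fin n)}
    (h : ‖x‖ = ‖y‖) :
    sphereUniform n R (Metric.closedBall x r) = sphereUniform n R (Metric.closedBall y r) := by
  rw [sphereUniform_apply n R Metric.isClosed_closedBall.measurableSet,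
    sphereUniform_apply n R Metric.isClosed_closedBall.measurableSet]
  congr 1
  let L := (ℝ ∙ (x - y))ᗮ.reflection
  have hL : L x = y := Submodule.reflection_sub h
  rw [← IsometryEquiv.hausdorffMeasure_image L.toIsometryEquiv]
  congr 1
  rw [Set.image_inter L.toIsometryEquiv.injective]
  have h1 : L.toIsometryEquiv '' Metric.closedBall x r = Metric.closedBall y r := by
    rw [IsometryEquiv.image_closedBall]; congr 1
  have h2 : L.toIsometryEquiv '' Metric.sphere 0 R = Metric.sphere 0 R := by
    rw [IsometryEquiv.image_sphere]; congr 1; exact map_zero L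
  rw [h1, h2]

lemma pow_sub_pow_ge (m : ℕ) {R r : ℝ} (hr : 0 ≤ r) (hrR : r ≤ R) :
    r * R ^ m ≤ R ^ (m + 1) - (R - r) ^ (m + 1) := by
  have h1 : (R - r) ^ m ≤ R ^ m := pow_le_pow_left₀ (by linarith) (by linarith) m
  have := mul_le_mul_of_nonneg_left h1 (sub_nonneg.2 hrR)
  rw [pow_succ, pow_succ]; nlinarith

/-- Cap estimate for balls centred on the sphere, by double counting: the integral of the mass of
`closedBall y (2r)` over `y` in the shell `R - r ≤ ‖y‖ ≤ R` is, by Fubini, at most the volume of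
a ball of radius `2r`, whereas every such ball contains one of radius `r` centred on the sphere. -/
lemma sphereUniform_cap_centred (m : ℕ) {R r : ℝ} (hr : 0 < r) (hrR : r < R)
    {x₀ : EuclideanSpace ℝ (Fin (m + 1))} (hx₀ : ‖x₀‖ = R) :
    sphereUniform (m + 1) R (Metric.closedBall x₀ r) ≤
      ENNReal.ofReal (2 ^ (m + 1) * (r / R) ^ m) := by
  set σ := sphereUniform (m + 1) R with hσ
  set M := σ (Metric.closedBall x₀ r) with hM
  have hR : 0 < R := hr.trans hrR
  let A : Set (EuclideanSpace ℝ (Fin (m + 1))) := Metric.closedBall 0 R \ Metric.ball 0 (R - r)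
  have hA : MeasurableSet A :=
    Metric.isClosed_closedBall.measurableSet.diff Metric.isOpen_ball.measurableSet
  set ω := (volume (Metric.ball (0 : EuclideanSpace ℝ (Fin (m + 1))) 1)) with hω
  have hω0 : ω ≠ 0 := (Metric.measure_ball_pos _ _ one_pos).ne'
  have hωt : ω ≠ ⊤ := measure_ball_lt_top.ne
  have hfr : Module.finrank ℝ (EuclideanSpace ℝ (Fin (m + 1))) = m + 1 := by simp
  have hvA : ENNReal.ofReal (r * R ^ m) * ω ≤ volume A := by
    have hsub : Metric.ball (0 : EuclideanSpace ℝ (Fin (m + 1))) (R - r) ⊆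
        Metric.closedBall 0 R :=
      Metric.ball_subset_closedBall.trans (Metric.closedBall_subset_closedBall (by linarith))
    rw [measure_sdiff hsub Metric.isOpen_ball.measurableSet.nullMeasurableSet
      measure_ball_lt_top.ne, Measure.addHaar_closedBall _ _ hR.le,
      Measure.addHaar_ball _ _ (by linarith : 0 ≤ R - r), hfr, ← hω,
      ← ENNReal.sub_mul (fun _ _ => hωt), ← ENNReal.ofReal_sub _ (by
        have : 0 < R - r := by linarith
        positivity)]
    gcongr
    exact pow_sub_pow_ge m hr.le hrR.le
  let D : Set (EuclideanSpace ℝ (Fin (m + 1)) × EuclideanSpace ℝ (Fin (m + 1))) :=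
    {q | dist q.1 q.2 ≤ 2 * r}
  have hD : MeasurableSet D := (isClosed_le continuous_dist continuous_const).measurableSet
  have lower : M * volume A ≤ ((volume.restrict A).prod σ) D := by
    rw [Measure.prod_apply hD, ← setLIntegral_const]
    refine setLIntegral_mono' hA fun y hy => ?_
    have hy1 : ‖y‖ ≤ R := by simpa using hy.1
    have hy2 : R - r ≤ ‖y‖ := by simpa using hy.2
    have hy0 : 0 < ‖y‖ := by linarith
    have hn : ‖(R / ‖y‖) • y‖ = R := by
      rw [norm_smul, Real.norm_of_nonneg (by positivity)]; field_simp
    rw [hM, sphereUniform_closedBall_eq (m + 1) R r (hx₀.trans hn.symm)]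
    refine measure_mono fun z hz => ?_
    have h1 : dist y ((R / ‖y‖) • y) ≤ r := by
      have : y - (R / ‖y‖) • y = (1 - R / ‖y‖) • y := by rw [sub_smul, one_smul]
      rw [dist_eq_norm, this, norm_smul, Real.norm_eq_abs, abs_of_nonpos]
      · have : -(1 - R / ‖y‖) * ‖y‖ = R - ‖y‖ := by field_simp; ring
        linarith
      · rw [sub_nonpos, le_div_iff₀ hy0]; linarith
    have h2 := dist_triangle_right y z ((R / ‖y‖) • y)
    have h3 := Metric.mem_closedBall.1 hz
    change dist y z ≤ 2 * r
    linarith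
  have upper : ((volume.restrict A).prod σ) D ≤ ENNReal.ofReal ((2 * r) ^ (m + 1)) * ω := by
    rw [Measure.prod_apply_symm hD]
    calc _ ≤ ∫⁻ _, ENNReal.ofReal ((2 * r) ^ (m + 1)) * ω ∂σ := by
          refine lintegral_mono fun z => ?_
          refine (Measure.restrict_apply_le _ _).trans ?_
          have : ((fun y => (y, z)) ⁻¹' D) = Metric.closedBall z (2 * r) := by
            ext y; simp [D]
          rw [this, Measure.addHaar_closedBall _ _ (by positivity), hfr]
      _ ≤ _ := by
          rw [lintegral_const]
          exact mul_le_of_le_one_right' (sphereUniform_univ_le _ _)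
  have key : M * ENNReal.ofReal (r * R ^ m) ≤ ENNReal.ofReal ((2 * r) ^ (m + 1)) := by
    rw [← ENNReal.mul_le_mul_iff_left hω0 hωt, mul_assoc]
    exact (mul_le_mul_right hvA M).trans (lower.trans upper)
  have hpos : 0 < r * R ^ m := by positivity
  rw [← ENNReal.le_div_iff_mul_le (Or.inl (ENNReal.ofReal_pos.2 hpos).ne')
    (Or.inl ENNReal.ofReal_ne_top), ← ENNReal.ofReal_div_of_pos hpos] at key
  refine key.trans (ENNReal.ofReal_le_ofReal (le_of_eq ?_))
  rw [div_pow]; field_simp; ring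

/-- Cap estimate: a ball of radius `r`, with arbitrary centre, has mass `O((r / R) ^ m)`. -/
lemma sphereUniform_cap (m : ℕ) {R r : ℝ} (hr : 0 < r) (hR : 0 < R)
    (z : EuclideanSpace ℝ (Fin (m + 1))) :
    sphereUniform (m + 1) R (Metric.closedBall z r) ≤
      ENNReal.ofReal (4 ^ (m + 1) * (r / R) ^ m) := by
  have hc : (2 : ℝ) ^ (m + 1) * (2 * r / R) ^ m ≤ 4 ^ (m + 1) * (r / R) ^ m := by
    have : (4 : ℝ) ^ (m + 1) * (r / R) ^ m = 2 * (2 ^ (m + 1) * (2 * r / R) ^ m) := by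
      rw [show (4 : ℝ) = 2 * 2 by norm_num, mul_pow, mul_div_assoc, mul_pow]; ring
    have h0 : 0 ≤ (2 : ℝ) ^ (m + 1) * (2 * r / R) ^ m := by positivity
    linarith
  refine le_trans ?_ (ENNReal.ofReal_le_ofReal hc)
  rcases lt_or_ge (2 * r) R with h | h
  · by_cases hne : ∃ x ∈ Metric.closedBall z r, ‖x‖ = R
    · obtain ⟨x, hx, hxR⟩ := hne
      refine le_trans (measure_mono ?_) (sphereUniform_cap_centred m (by positivity) h hxR)
      refine Metric.closedBall_subset_closedBall' ?_
      rw [dist_comm]; have := Metric.mem_closedBall.1 hx; linarith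
    · have : sphereUniform (m + 1) R (Metric.closedBall z r) = 0 := by
        refine measure_mono_null (fun x hx => ?_) (ae_iff.1 (sphereUniform_ae_norm (m + 1) R))
        exact fun h => hne ⟨x, hx, h⟩
      rw [this]; exact zero_le
  · refine (measure_mono (Set.subset_univ _)).trans ((sphereUniform_univ_le _ _).trans ?_)
    rw [ENNReal.one_le_ofReal]
    have h1 : 1 ≤ 2 * r / R := by rwa [one_le_div hR]
    exact one_le_mul_of_one_le_of_one_le (one_le_pow₀ (by norm_num)) (one_le_pow₀ h1)

/-! ### Fixing the far endpoint -/

/-- Position of the near endpoint. If `[x, y]` passes within `1` of `p` and `y` is the endpoint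
closer to `p`, then `y` is within `4` of the point `x + l • (p - x)` on the line `xp`, and the
equation `‖y‖ = ‖x‖` confines the coordinate `l * ‖p - x‖` along this line to an interval of
length `O(R / ‖p - x‖)`. -/
lemma near_endpoint {E : Type*} [NormedAddCommGroup E] [InnerProductSpace ℝ E]
    {x y z p : E} {R : ℝ} (hR : 2 ≤ R) (hx : ‖x‖ = R) (hy : ‖y‖ = R)
    (hz : z ∈ segment ℝ x y) (hzp : ‖z - p‖ ≤ 1) (hyp : ‖y - p‖ ≤ ‖p - x‖)
    (hd : 2 ≤ ‖p - x‖) (hdR : ‖p - x‖ ≤ 3 * R) :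
    ∃ (l : ℝ) (w : E), y = x + l • (p - x) + w ∧ ‖w‖ ≤ 4 ∧
      |l * ‖p - x‖ ^ 2 + 2 * inner ℝ x (p - x)| ≤ 40 * R := by
  rw [segment_eq_image] at hz
  obtain ⟨θ, ⟨h0, h1⟩, rfl⟩ := hz
  set d := ‖p - x‖ with hdef
  have e1 : ((1 - θ) • x + θ • y) - p = θ • (y - x) - (p - x) := by module
  simp only [e1] at hzp
  have hyx : ‖y - x‖ ≤ 2 * d := by
    have : y - x = (y - p) + (p - x) := by abel
    rw [this]; exact (norm_add_le _ _).trans (by linarith)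
  have hlow : d - 1 ≤ θ * ‖y - x‖ := by
    have h2 := norm_sub_norm_le (p - x) (θ • (y - x))
    rw [norm_sub_rev (p - x) (θ • (y - x)), norm_smul, Real.norm_of_nonneg h0] at h2
    linarith
  have hθ : 0 < θ := by
    rcases h0.lt_or_eq with h | h
    · exact h
    · rw [← h] at hlow; linarith
  have hθ4 : 1 / 4 ≤ θ := by
    have := mul_le_mul_of_nonneg_left hyx h0
    by_contra! hc
    nlinarith
  set l := θ⁻¹ with hl
  have hl1 : 1 ≤ l := (one_le_inv₀ hθ).2 h1
  have hl4 : l ≤ 4 := by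
    rw [hl]; exact inv_le_of_inv_le₀ (by norm_num) (by linarith)
  have hw : ‖l • (θ • (y - x) - (p - x))‖ ≤ 4 := by
    rw [norm_smul, Real.norm_of_nonneg (by linarith)]
    nlinarith [norm_nonneg (θ • (y - x) - (p - x))]
  have hyeq : y = x + l • (p - x) + l • (θ • (y - x) - (p - x)) := by
    rw [smul_sub l (θ • (y - x)), smul_smul, hl, inv_mul_cancel₀ hθ.ne']; module
  refine ⟨l, _, hyeq, hw, ?_⟩
  generalize l • (θ • (y - x) - (p - x)) = w at hw hyeq
  have hsq : ‖y‖ ^ 2 = ‖x‖ ^ 2 := by rw [hx, hy]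
  rw [hyeq, norm_add_sq_real, norm_add_sq_real, norm_smul, inner_add_left, inner_smul_left,
    inner_smul_right, mul_pow, Real.norm_eq_abs, sq_abs, ← hdef] at hsq
  simp only [conj_trivial] at hsq
  have i1 := abs_le.1 (abs_real_inner_le_norm x w)
  have i2 := abs_le.1 (abs_real_inner_le_norm (p - x) w)
  rw [hx] at i1
  rw [← hdef] at i2
  have hwn := norm_nonneg w
  have b1 : R * ‖w‖ ≤ R * 4 := by gcongr
  have b2 : d * ‖w‖ ≤ 3 * R * 4 := by gcongr
  have b3 : ‖w‖ ^ 2 ≤ 4 ^ 2 := by gcongr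
  have b4 : 0 ≤ ‖w‖ ^ 2 := by positivity
  set q := l * d ^ 2 + 2 * inner ℝ x (p - x) with hq
  -- dividing the identity `‖y‖² = ‖x‖²` by `l ≥ 1`
  have hid : l * (q + 2 * inner ℝ (p - x) w) = -(2 * inner ℝ x w + ‖w‖ ^ 2) := by
    rw [hq]; linarith
  have hup : q + 2 * inner ℝ (p - x) w ≤ 16 * R := by
    by_contra! hc
    nlinarith
  have hlo : -(16 * R) ≤ q + 2 * inner ℝ (p - x) w := by
    by_contra! hc
    nlinarith
  rw [abs_le]; constructor <;> linarith

/-- The near endpoints lie in a union of `O(R / d)` balls of radius `5`, hence the mass of the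
set of `y` with `‖y - p‖ ≤ ‖x - p‖` for which `[x, y]` passes within `1` of `p`. -/
lemma sphereUniform_near_endpoint (m : ℕ) {R : ℝ} (hR : 2 ≤ R)
    {x p : EuclideanSpace ℝ (Fin (m + 1))} (hx : ‖x‖ = R) (hdR : ‖p - x‖ ≤ 3 * R) :
    sphereUniform (m + 1) R
      {y | (∃ z ∈ segment ℝ x y, ‖z - p‖ ≤ 1) ∧ ‖y - p‖ ≤ ‖p - x‖} ≤
      ENNReal.ofReal (89 * (R / max ‖p - x‖ 1) * (4 ^ (m + 1) * (5 / R) ^ m)) := by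
  set d := ‖p - x‖ with hdef
  have hR0 : 0 < R := by linarith
  rcases lt_or_ge d 2 with hd | hd
  · refine (measure_mono (t := Metric.closedBall p 5) fun y hy => ?_).trans
      ((sphereUniform_cap m (by norm_num) hR0 p).trans (ENNReal.ofReal_le_ofReal ?_))
    · rw [mem_closedBall_iff_norm]; linarith [hy.2]
    · refine le_mul_of_one_le_left (by positivity) ?_
      have : 1 ≤ R / max d 1 := by
        rw [one_le_div (by positivity)]; exact max_le (by linarith) (by linarith)
      linarith
  · rw [max_eq_left (by linarith)]
    have hd0 : 0 < d := by linarith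
    set a₀ := -(2 * inner ℝ x (p - x)) / d with ha₀
    set M : ℤ := ⌈40 * R / d⌉ with hM
    have hM1 : 40 * R / d ≤ M := Int.le_ceil _
    have hM2 : (M : ℝ) < 40 * R / d + 1 := Int.ceil_lt_add_one _
    have hM0 : 0 ≤ M := Int.ceil_nonneg (by positivity)
    let c : ℤ → EuclideanSpace ℝ (Fin (m + 1)) := fun j => x + ((a₀ + j) / d) • (p - x)
    have hae : ∀ᵐ y ∂(sphereUniform (m + 1) R),
        y ∈ {y | (∃ z ∈ segment ℝ x y, ‖z - p‖ ≤ 1) ∧ ‖y - p‖ ≤ d} →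
        y ∈ ⋃ j ∈ Finset.Icc (-M) M, Metric.closedBall (c j) 5 := by
      filter_upwards [sphereUniform_ae_norm (m + 1) R] with y hy hmem
      obtain ⟨⟨z, hz, hzp⟩, hyp⟩ := hmem
      obtain ⟨l, w, hyeq, hw, hl⟩ := near_endpoint hR hx hy hz hzp hyp hd hdR
      have hl' : |l * d - a₀| ≤ 40 * R / d := by
        have : l * d - a₀ = (l * d ^ 2 + 2 * inner ℝ x (p - x)) / d := by
          rw [ha₀]; field_simp; ring
        rw [this, abs_div, abs_of_pos hd0]; gcongr
      have hl2 := abs_le.1 (hl'.trans hM1)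
      have hfl := Int.floor_le (l * d - a₀)
      have hfl2 := Int.lt_floor_add_one (l * d - a₀)
      simp only [Set.mem_iUnion, Finset.mem_Icc]
      refine ⟨⌊l * d - a₀⌋, ⟨Int.le_floor.2 (by push_cast; exact hl2.1), ?_⟩, ?_⟩
      · exact_mod_cast hfl.trans hl2.2
      · set j := ⌊l * d - a₀⌋
        have e : y - c j = ((l * d - a₀ - j) / d) • (p - x) + w := by
          have : l = (l * d) / d := by field_simp
          rw [hyeq]; simp only [c]
          nth_rewrite 1 [this]
          module
        rw [mem_closedBall_iff_norm, e]
        refine (norm_add_le _ _).trans ?_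
        rw [norm_smul, ← hdef, Real.norm_of_nonneg (div_nonneg (by linarith) hd0.le),
          div_mul_cancel₀ _ hd0.ne']
        linarith
    refine (measure_mono_ae hae).trans ((measure_biUnion_finset_le _ _).trans ?_)
    refine (Finset.sum_le_card_nsmul _ _ _
      fun j _ => sphereUniform_cap m (by norm_num : (0 : ℝ) < 5) hR0 (c j)).trans ?_
    rw [nsmul_eq_mul, ← ENNReal.ofReal_natCast, ← ENNReal.ofReal_mul (by positivity)]
    refine ENNReal.ofReal_le_ofReal (mul_le_mul_of_nonneg_right ?_ (by positivity))
    have hcard : ((Finset.Icc (-M) M).card : ℝ) = 2 * M + 1 := by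
      rw [Int.card_Icc]
      have : (((M + 1 - -M).toNat : ℤ) : ℝ) = ((M + 1 - -M : ℤ) : ℝ) := by
        rw [Int.toNat_of_nonneg (by omega)]
      rw [← Int.cast_natCast, this]; push_cast; ring
    have h3 : 1 ≤ 3 * (R / d) := by
      rw [← mul_div_assoc, one_le_div hd0]; exact hdR
    have h4 : 40 * R / d = 40 * (R / d) := by ring
    rw [hcard]; linarith

/-! ### The mean of the inverse distance -/

/-- `E[R / |x - p|]` is bounded when the sphere has dimension `m ≥ 2`: dyadic decomposition of
`|x - p|`, each ball `closedBall p (3R / 2 ^ k)` having mass `O(4 ^ (-k))`. -/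
lemma lintegral_inv_dist (m : ℕ) (hm : 2 ≤ m) {R : ℝ} (hR : 2 ≤ R)
    (p : EuclideanSpace ℝ (Fin (m + 1))) (g : EuclideanSpace ℝ (Fin (m + 1)) → ENNReal) (K : ℝ)
    (hK : 0 ≤ K)
    (hg : ∀ᵐ x ∂(sphereUniform (m + 1) R), g x ≠ 0 →
      ‖p - x‖ ≤ 3 * R ∧ g x ≤ ENNReal.ofReal (K * (R / max ‖p - x‖ 1))) :
    ∫⁻ x, g x ∂(sphereUniform (m + 1) R) ≤
      ENNReal.ofReal (K * (4 * (4 ^ (m + 1) * 3 ^ m))) := by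
  have hR0 : 0 < R := by linarith
  let s : ℕ → Set (EuclideanSpace ℝ (Fin (m + 1))) := fun k =>
    Metric.closedBall p (3 * R / 2 ^ k)
  have hs : ∀ k, MeasurableSet (s k) := fun k => Metric.isClosed_closedBall.measurableSet
  have hpt : ∀ᵐ x ∂(sphereUniform (m + 1) R), g x ≤
      ∑' k, (s k).indicator (fun _ => ENNReal.ofReal (K * 2 ^ (k + 1))) x := by
    filter_upwards [hg] with x hx
    by_cases h0 : g x = 0
    · rw [h0]; exact zero_le
    obtain ⟨h1, h2⟩ := hx h0
    set D := max ‖p - x‖ 1 with hD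
    have hD0 : 0 < D := by positivity
    have hD3 : D ≤ 3 * R := max_le h1 (by linarith)
    obtain ⟨k, hk1, hk2⟩ := exists_nat_pow_near (x := 3 * R / D) (y := 2)
      (by rwa [one_le_div hD0]) (by norm_num)
    refine le_trans ?_ (ENNReal.le_tsum k)
    have hmem : x ∈ s k := by
      rw [mem_closedBall_iff_norm', le_div_iff₀ (by positivity)]
      rw [le_div_iff₀ hD0] at hk1
      have : ‖p - x‖ * 2 ^ k ≤ D * 2 ^ k := by gcongr; exact le_max_left _ _
      linarith
    rw [Set.indicator_of_mem hmem]
    refine h2.trans (ENNReal.ofReal_le_ofReal (mul_le_mul_of_nonneg_left ?_ hK))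
    have : 3 * R / D = 3 * (R / D) := by ring
    have : 0 ≤ R / D := by positivity
    linarith
  refine (lintegral_mono_ae hpt).trans ?_
  rw [lintegral_tsum fun k => (measurable_const.indicator (hs k)).aemeasurable]
  have hterm : ∀ k, ∫⁻ x, (s k).indicator (fun _ => ENNReal.ofReal (K * 2 ^ (k + 1))) x
      ∂(sphereUniform (m + 1) R) ≤
      ENNReal.ofReal (K * (2 * (4 ^ (m + 1) * 3 ^ m)) * (1 / 2) ^ k) := by
    intro k
    rw [lintegral_indicator_const (hs k)]
    refine (mul_le_mul_right (sphereUniform_cap m (by positivity) hR0 p) _).trans ?_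
    rw [← ENNReal.ofReal_mul (by positivity)]
    apply ENNReal.ofReal_le_ofReal
    have e : 3 * R / 2 ^ k / R = 3 * (1 / 2) ^ k := by
      rw [one_div, inv_pow]; field_simp
    -- the exponent `m ≥ 2` beats the factor `2 ^ k`
    have hq : ((1 / 2 : ℝ) ^ k) ^ m ≤ ((1 / 2 : ℝ) ^ k) ^ 2 :=
      pow_le_pow_of_le_one (by positivity) (pow_le_one₀ (by norm_num) (by norm_num)) hm
    have e2 : (2 : ℝ) ^ (k + 1) * ((1 / 2 : ℝ) ^ k) ^ 2 = 2 * (1 / 2) ^ k := by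
      rw [one_div, inv_pow]; field_simp; ring
    rw [e, mul_pow]
    calc K * 2 ^ (k + 1) * (4 ^ (m + 1) * (3 ^ m * ((1 / 2 : ℝ) ^ k) ^ m))
        ≤ K * 2 ^ (k + 1) * (4 ^ (m + 1) * (3 ^ m * ((1 / 2 : ℝ) ^ k) ^ 2)) := by gcongr
      _ = K * (4 ^ (m + 1) * 3 ^ m) * (2 ^ (k + 1) * ((1 / 2 : ℝ) ^ k) ^ 2) := by ring
      _ = _ := by rw [e2]; ring
  refine (ENNReal.tsum_le_tsum hterm).trans ?_
  rw [← ENNReal.ofReal_tsum_of_nonneg (fun k => by positivity)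
    (summable_geometric_two.mul_left _), tsum_mul_left, tsum_geometric_two]
  exact ENNReal.ofReal_le_ofReal (by linarith)

lemma isClosed_segment_near {E : Type*} [NormedAddCommGroup E] [NormedSpace ℝ E] (p : E) :
    IsClosed {q : E × E | (∃ z ∈ segment ℝ q.1 q.2, ‖z - p‖ ≤ 1) ∧ ‖q.2 - p‖ ≤ ‖p - q.1‖} := by
  have hdist : IsClosed {q : E × E | ‖q.2 - p‖ ≤ ‖p - q.1‖} :=
    isClosed_le (by fun_prop) (by fun_prop)
  -- projection of a closed set along the compact parameter interval
  have h : IsClosed {t : unitInterval × (E × E) |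
      ‖((1 - (t.1 : ℝ)) • t.2.1 + (t.1 : ℝ) • t.2.2) - p‖ ≤ 1} :=
    isClosed_le (by fun_prop) continuous_const
  have e : {q : E × E | ∃ z ∈ segment ℝ q.1 q.2, ‖z - p‖ ≤ 1} =
      Prod.snd '' {t : unitInterval × (E × E) |
        ‖((1 - (t.1 : ℝ)) • t.2.1 + (t.1 : ℝ) • t.2.2) - p‖ ≤ 1} := by
    ext q
    simp [segment_eq_image]
  have hseg : IsClosed {q : E × E | ∃ z ∈ segment ℝ q.1 q.2, ‖z - p‖ ≤ 1} :=
    e ▸ isClosedMap_snd_of_compactSpace _ h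
  exact hseg.inter hdist

/-! ### The probability estimate -/

/-- **A random segment with endpoints on a sphere is rarely near a fixed point.**
For every `n ≥ 3` there is `C(n) > 0` such that for every `R ≥ 2` and every `p ∈ ℝⁿ`,
two independent uniform random points `x, y` on the sphere of radius `R` satisfy
`inf_{z ∈ [x,y]} ‖z − p‖ ≤ 1` with probability at most `C(n)·R^{1−n}`. -/
theorem sphere_segment_near_point_prob (n : ℕ) (hn : 3 ≤ n) :
    ∃ C : ℝ, 0 < C ∧ ∀ R : ℝ, 2 ≤ R → ∀ p : EuclideanSpace ℝ (Fin n),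
      ((sphereUniform n R).prod (sphereUniform n R))
        {xy : EuclideanSpace ℝ (Fin n) × EuclideanSpace ℝ (Fin n) |
          Metric.infDist p (segment ℝ xy.1 xy.2) ≤ 1}
        ≤ ENNReal.ofReal (C * R ^ ((1 : ℝ) - n)) := by
  obtain ⟨m, rfl⟩ : ∃ m, n = m + 1 := ⟨n - 1, by omega⟩
  have hm : 2 ≤ m := by omega
  refine ⟨2 * (89 * (4 ^ (m + 1) * 5 ^ m) * (4 * (4 ^ (m + 1) * 3 ^ m))), by positivity, ?_⟩
  intro R hR p
  have hR0 : 0 < R := by linarith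
  set σ := sphereUniform (m + 1) R with hσ
  let F : Set (EuclideanSpace ℝ (Fin (m + 1)) × EuclideanSpace ℝ (Fin (m + 1))) :=
    {q | (∃ z ∈ segment ℝ q.1 q.2, ‖z - p‖ ≤ 1) ∧ ‖q.2 - p‖ ≤ ‖p - q.1‖}
  have hF : MeasurableSet F := (isClosed_segment_near p).measurableSet
  have hcover : {xy : EuclideanSpace ℝ (Fin (m + 1)) × EuclideanSpace ℝ (Fin (m + 1)) |
      Metric.infDist p (segment ℝ xy.1 xy.2) ≤ 1} ⊆ F ∪ Prod.swap ⁻¹' F := by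
    rintro ⟨x, y⟩ hxy
    have hcomp : IsCompact (segment ℝ x y) := by
      rw [segment_eq_image]; exact isCompact_Icc.image (by fun_prop)
    obtain ⟨z, hz, hzd⟩ := hcomp.exists_infDist_eq_dist ⟨x, left_mem_segment ℝ x y⟩ p
    have hz1 : ‖z - p‖ ≤ 1 := by
      rw [← dist_eq_norm, dist_comm, ← hzd]; exact hxy
    rcases le_total ‖y - p‖ ‖x - p‖ with h | h
    · exact Or.inl ⟨⟨z, hz, hz1⟩, by rwa [norm_sub_rev p]⟩
    · exact Or.inr ⟨⟨z, by rw [segment_symm]; exact hz, hz1⟩, by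
        change ‖x - p‖ ≤ ‖p - y‖; rwa [norm_sub_rev p]⟩
  have hswap : (σ.prod σ) (Prod.swap ⁻¹' F) = (σ.prod σ) F := by
    rw [← Measure.map_apply measurable_swap hF, Measure.prod_swap]
  have hmain : (σ.prod σ) F ≤
      ENNReal.ofReal (89 * (4 ^ (m + 1) * (5 / R) ^ m) * (4 * (4 ^ (m + 1) * 3 ^ m))) := by
    rw [Measure.prod_apply hF]
    refine lintegral_inv_dist m hm hR p _ _ (by positivity) ?_
    filter_upwards [sphereUniform_ae_norm (m + 1) R] with x hx hne
    have hdR : ‖p - x‖ ≤ 3 * R := by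
      by_contra! hc
      refine hne (measure_mono_null (fun y hy => ?_)
        (ae_iff.1 (sphereUniform_ae_norm (m + 1) R)))
      intro hyR
      obtain ⟨⟨z, hz, hz1⟩, -⟩ := hy
      have hzR : z ∈ Metric.closedBall 0 R :=
        (convex_closedBall (0 : EuclideanSpace ℝ (Fin (m + 1))) R).segment_subset
          (by simp [hx]) (by simp [hyR]) hz
      rw [mem_closedBall_zero_iff] at hzR
      have h1 : p - x = z - (z - p) - x := by abel
      have h2 := norm_sub_le (z - (z - p)) x
      have h3 := norm_sub_le z (z - p)
      rw [h1] at hc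
      linarith
    refine ⟨hdR, (sphereUniform_near_endpoint m hR hx hdR).trans
      (ENNReal.ofReal_le_ofReal (le_of_eq (by ring)))⟩
  have hpow : R ^ ((1 : ℝ) - ((m + 1 : ℕ) : ℝ)) = (R ^ m)⁻¹ := by
    rw [show (1 : ℝ) - ((m + 1 : ℕ) : ℝ) = -(m : ℝ) by push_cast; ring,
      Real.rpow_neg hR0.le, Real.rpow_natCast]
  calc _ ≤ (σ.prod σ) F + (σ.prod σ) (Prod.swap ⁻¹' F) :=
        (measure_mono hcover).trans (measure_union_le _ _)
    _ ≤ _ := by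
      rw [hswap]
      refine (add_le_add hmain hmain).trans ?_
      rw [← ENNReal.ofReal_add (by positivity) (by positivity), hpow]
      refine ENNReal.ofReal_le_ofReal (le_of_eq ?_)
      rw [div_pow]; ring
end

section
/- Let E be a real inner product space, let ℓ > 0 and 0 < α ≤ π, and let u, v, w, u′, v′, w′ ∈ E satisfy: ‖u − v‖ ≥ ℓ, ‖w − v‖ ≥ ℓ, the angle between u − v and w − v is at least α, and ‖u − u′‖ ≤ τ, ‖v − v′‖ ≤ τ, ‖w − w′‖ ≤ τ where τ ≤ α·ℓ/32. Then the angle between u′ − v′ and w′ − v′ is at least α/2. -/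
/-! The angle satisfies the triangle inequality, so writing `a = u - v`, `b = w - v` and `a'`, `b'`
for their perturbations, `∠ a b ≤ ∠ a a' + ∠ a' b' + ∠ b' b`. It suffices that the two outer angles
are at most `α / 4`. Since `‖a - a'‖ ≤ 2τ ≤ (α / 16) ‖a‖ < ‖a‖`, the angle `θ = ∠ a a'` is acute and
the law of sines gives `sin θ ≤ α / 16`; Jordan's inequality `2 / π * θ ≤ sin θ` then yields
`θ ≤ (π / 2) * (α / 16) < α / 4`. -/

open InnerProductGeometry

/-- A perturbation of relative size `ε < 1` turns a vector by at most `2 * ε`. The sharp bound is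
`arcsin ε`; the constant `2` comes from Jordan's inequality and `π < 4`. -/
theorem angle_le_two_mul_of_norm_sub_le {E : Type*} [NormedAddCommGroup E] [InnerProductSpace ℝ E]
    {x y : E} {ε : ℝ} (hx : 0 < ‖x‖) (hε : ε < 1) (h : ‖x - y‖ ≤ ε * ‖x‖) :
    angle x y ≤ 2 * ε := by
  have hlt : ‖x - y‖ < ‖x‖ := by nlinarith
  have hinner : 0 ≤ inner ℝ x y := by
    have h1 := real_inner_le_norm x (x - y)
    rw [inner_sub_right, real_inner_self_eq_norm_sq] at h1
    nlinarith
  have hacute : angle x y ≤ Real.pi / 2 :=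
    Real.arccos_le_pi_div_two.2 (by positivity)
  have hsin : Real.sin (angle x y) ≤ ε := by
    have h1 := sin_angle_mul_norm_eq_sin_angle_mul_norm x y
    have h2 := Real.sin_le_one (angle y (x - y))
    have h3 := norm_nonneg (x - y)
    nlinarith
  have hJ := Real.mul_le_sin (angle_nonneg x y) hacute
  have hpi := Real.pi_le_four
  have hhalf : 1 / 2 * angle x y ≤ 2 / Real.pi * angle x y := by
    refine mul_le_mul_of_nonneg_right ?_ (angle_nonneg x y)
    rw [div_le_div_iff₀ two_pos Real.pi_pos]
    linarith
  linarith

/-- **Quantitative stability of angles under perturbation of endpoints.**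
Let `E` be a real inner product space, `ℓ > 0`, `0 < α ≤ π`, and let
`u, v, w, u′, v′, w′ ∈ E` satisfy `‖u − v‖ ≥ ℓ`, `‖w − v‖ ≥ ℓ`, the angle between
`u − v` and `w − v` is at least `α`, and `‖u − u′‖ ≤ τ`, `‖v − v′‖ ≤ τ`,
`‖w − w′‖ ≤ τ` where `τ ≤ α·ℓ/32`.  Then the angle between `u′ − v′` and `w′ − v′`
is at least `α/2`. -/
theorem angle_stability {E : Type*} [NormedAddCommGroup E] [InnerProductSpace ℝ E]
    (ℓ α τ : ℝ) (hℓ : 0 < ℓ) (hα0 : 0 < α) (hαπ : α ≤ Real.pi)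
    (u v w u' v' w' : E)
    (huv : ℓ ≤ ‖u - v‖) (hwv : ℓ ≤ ‖w - v‖)
    (hangle : α ≤ angle (u - v) (w - v))
    (hu : ‖u - u'‖ ≤ τ) (hv : ‖v - v'‖ ≤ τ) (hw : ‖w - w'‖ ≤ τ)
    (hτ : τ ≤ α * ℓ / 32) :
    α / 2 ≤ angle (u' - v') (w' - v') := by
  have key : ∀ p p' : E, ℓ ≤ ‖p - v‖ → ‖p - p'‖ ≤ τ → angle (p - v) (p' - v') ≤ α / 4 := by
    intro p p' hpv hp
    have hdiff : ‖(p - v) - (p' - v')‖ ≤ 2 * τ := by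
      have := norm_sub_le (p - p') (v - v')
      rw [show (p - v) - (p' - v') = (p - p') - (v - v') by abel]
      linarith
    refine (angle_le_two_mul_of_norm_sub_le (ε := α / 16) (hℓ.trans_le hpv) ?_ ?_).trans ?_
    · linarith [Real.pi_le_four]
    · nlinarith
    · linarith
  have h1 := angle_le_angle_add_angle (u - v) (u' - v') (w - v)
  have h2 := angle_le_angle_add_angle (u' - v') (w' - v') (w - v)
  have h3 := key u u' huv hu
  have h4 := key w w' hwv hw
  rw [angle_comm] at h4
  linarith
end

section
/- For all integers n ≥ 3 and L ≥ 1 there exists α_0 = α_0(n, L) > 0 with the following property. For every finite simple graph G with maximum degree at most L and every R ≥ 1, there exists a map f from the vertex set of G to the sphere S_R = {x ∈ ℝⁿ : ‖x‖ = R} such that: (i) for any two distinct vertices u, v at graph distance at most 2 in G, ‖f(u) − f(v)‖ ≥ α_0·R; (ii) for every vertex v and any two distinct neighbors u, w of v, the angle between f(u) − f(v) and f(w) − f(v) is at least α_0; and (iii) the linear extension of f is an embedding: for any two edges of G sharing no vertex, the segments [f(u), f(v)] and [f(x), f(y)] joining the images of their endpoints are disjoint, and for any vertex z and any edge {u, v}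 not containing z, the point f(z) does not lie on the segment [f(u), f(v)]. -/
/-!
The vertices are placed on a rational curve in a two-dimensional unit sphere, the inverse
stereographic image of the half-parabola `t ↦ (t, t ^ 2)`, `t > 0`. A plane section of the sphere
projects to a circle or a line, which meets the parabola at the roots of a quartic in `t` without
cubic term; four distinct positive numbers have nonzero sum, so they are never its roots. Hence no
four points of the curve are coplanar (`curve_weight_eq_zero`), and any injective choice of
parameters is linearly embedded, with no three points collinear.

For the uniform bounds, colour the vertices with boundedly many colours so that vertices at graph
distance at most `2` get different colours (`exists_bounded_coloring`), and perturb the colours,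
seen as integer parameters, injectively by less than `1 / 2`. Parameters of close vertices are then
`1 / 2`-separated in a fixed compact interval, so distances and angles are bounded below by
compactness (`exists_dist_bound`, `exists_angle_bound`); scaling by `R` preserves the bounds.
-/


open InnerProductGeometry

open scoped RealInnerProductSpace

/-! ### A spherical curve in general position -/

section Curve

variable {E : Type*} [NormedAddCommGroup E] [InnerProductSpace ℝ E]

/-- The inverse stereographic image of `(t, t ^ 2)` on the unit sphere of the span of
`e 0, e 1, e 2`. -/
noncomputable def sphCurve (e : Fin 3 → E) (t : ℝ) : E :=
  (2 * t / (1 + t ^ 2 + t ^ 4)) • e 0 + (2 * t ^ 2 / (1 + t ^ 2 + t ^ 4)) • e 1 +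
    ((t ^ 2 + t ^ 4 - 1) / (1 + t ^ 2 + t ^ 4)) • e 2

lemma sphCurve_den_pos (t : ℝ) : 0 < 1 + t ^ 2 + t ^ 4 := by positivity

lemma continuous_sphCurve (e : Fin 3 → E) : Continuous (sphCurve e) := by
  unfold sphCurve
  have h : ∀ t : ℝ, 1 + t ^ 2 + t ^ 4 ≠ 0 := fun t => (sphCurve_den_pos t).ne'
  fun_prop (disch := exact h _)

lemma inner_orthonormal {e : Fin 3 → E} (he : Orthonormal ℝ e) (i j : Fin 3) :
    ⟪e i, e j⟫ = if i = j then 1 else 0 :=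
  orthonormal_iff_ite.1 he i j

lemma norm_sphCurve {e : Fin 3 → E} (he : Orthonormal ℝ e) (t : ℝ) : ‖sphCurve e t‖ = 1 := by
  have h := (sphCurve_den_pos t).ne'
  have h2 : ‖sphCurve e t‖ ^ 2 = 1 := by
    rw [← real_inner_self_eq_norm_sq]
    simp only [sphCurve, inner_add_left, inner_add_right, inner_smul_left, inner_smul_right,
      inner_orthonormal he]
    simp
    field_simp
    ring
  nlinarith [norm_nonneg (sphCurve e t)]

/-- In an affine relation between four points of the curve, a point whose parameter differs from
the other three has weight zero: pairing the relation with
`(t - b) (t - c) (t - d) (t + b + c + d)`, a quartic in `t` without cubic term, isolates its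
weight. -/
lemma curve_weight_eq_zero {e : Fin 3 → E} (he : Orthonormal ℝ e) {a b c d : ℝ}
    (ha : 0 < a) (hb : 0 < b) (hc : 0 < c) (hd : 0 < d)
    (hab : a ≠ b) (hac : a ≠ c) (had : a ≠ d) {p q r s : ℝ} (hs : p + q + r + s = 0)
    (h : p • sphCurve e a + q • sphCurve e b + r • sphCurve e c + s • sphCurve e d = 0) :
    p = 0 := by
  have h0 := congrArg (fun x => ⟪e 0, x⟫) h
  have h1 := congrArg (fun x => ⟪e 1, x⟫) h
  have h2 := congrArg (fun x => ⟪e 2, x⟫) h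
  simp only [sphCurve, inner_add_right, inner_smul_right, inner_orthonormal he] at h0 h1 h2
  simp at h0 h1 h2
  -- Dividing the weights by the denominators turns the coordinates into polynomials in `t`.
  have hA := (sphCurve_den_pos a).ne'
  have hB := (sphCurve_den_pos b).ne'
  have hC := (sphCurve_den_pos c).ne'
  have hD := (sphCurve_den_pos d).ne'
  obtain ⟨p', rfl⟩ : ∃ p', p = p' * (1 + a ^ 2 + a ^ 4) := ⟨p / _, (div_mul_cancel₀ _ hA).symm⟩
  obtain ⟨q', rfl⟩ : ∃ q', q = q' * (1 + b ^ 2 + b ^ 4) := ⟨q / _, (div_mul_cancel₀ _ hB).symm⟩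
  obtain ⟨r', rfl⟩ : ∃ r', r = r' * (1 + c ^ 2 + c ^ 4) := ⟨r / _, (div_mul_cancel₀ _ hC).symm⟩
  obtain ⟨s', rfl⟩ : ∃ s', s = s' * (1 + d ^ 2 + d ^ 4) := ⟨s / _, (div_mul_cancel₀ _ hD).symm⟩
  have key : ∀ w t x : ℝ, w * (1 + t ^ 2 + t ^ 4) * (x / (1 + t ^ 2 + t ^ 4)) = w * x := by
    intro w t x
    have := (sphCurve_den_pos t).ne'
    field_simp
  simp only [key] at h0 h1 h2
  -- The coordinates and the sum of the weights span the moments of orders `0, 1, 2, 4`.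
  have m0 : p' + q' + r' + s' = 0 := by linear_combination (hs - h2) / 2
  have m1 : p' * a + q' * b + r' * c + s' * d = 0 := by linear_combination h0 / 2
  have m2 : p' * a ^ 2 + q' * b ^ 2 + r' * c ^ 2 + s' * d ^ 2 = 0 := by
    linear_combination h1 / 2
  have m4 : p' * a ^ 4 + q' * b ^ 4 + r' * c ^ 4 + s' * d ^ 4 = 0 := by
    linear_combination (hs + h2) / 2 - m2
  have fin : p' * ((a - b) * (a - c) * (a - d) * (a + b + c + d)) = 0 := by
    linear_combination m4 + (b * c + b * d + c * d - (b + c + d) ^ 2) * m2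
      + ((b + c + d) * (b * c + b * d + c * d) - b * c * d) * m1
      - (b * c * d * (b + c + d)) * m0
  have hne : (a - b) * (a - c) * (a - d) * (a + b + c + d) ≠ 0 := by
    have : a + b + c + d ≠ 0 := by positivity
    simp [sub_ne_zero, *]
  rw [(mul_eq_zero.1 fin).resolve_right hne, zero_mul]

/-- The case of three points; the auxiliary fourth point, with
parameter `a + b + c`, gets weight zero. -/
lemma curve_weight_eq_zero_three {e : Fin 3 → E} (he : Orthonormal ℝ e) {a b c : ℝ}
    (ha : 0 < a) (hb : 0 < b) (hc : 0 < c)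
    (hab : a ≠ b) (hac : a ≠ c) {p q r : ℝ} (hs : p + q + r = 0)
    (h : p • sphCurve e a + q • sphCurve e b + r • sphCurve e c = 0) : p = 0 :=
  curve_weight_eq_zero he ha hb hc (d := a + b + c) (s := 0) (by positivity) hab hac
    (by linarith) (by linarith : p + q + r + 0 = 0) (by simpa using h)

lemma sphCurve_ne {e : Fin 3 → E} (he : Orthonormal ℝ e) {a b : ℝ}
    (ha : 0 < a) (hb : 0 < b) (hab : a ≠ b) : sphCurve e a ≠ sphCurve e b := by
  intro h
  have := curve_weight_eq_zero_three he (p := 1) (q := -1) (r := 0) ha hb hb hab hab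
    (by norm_num) (by simp [h])
  norm_num at this

/-- Chords of the curve from a common point have nonzero angle, as no three points are
collinear. -/
lemma angle_sphCurve_pos {e : Fin 3 → E} (he : Orthonormal ℝ e) {a b c : ℝ}
    (ha : 0 < a) (hb : 0 < b) (hc : 0 < c) (hab : a ≠ b) (hac : a ≠ c) :
    0 < angle (sphCurve e b - sphCurve e c) (sphCurve e a - sphCurve e c) := by
  refine lt_of_le_of_ne (angle_nonneg _ _) fun h => ?_
  obtain ⟨-, r, -, hr⟩ := angle_eq_zero_iff.1 h.symm
  have := curve_weight_eq_zero_three he (p := 1) (q := -r) (r := r - 1) ha hb hc hab hac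
    (by ring) (by linear_combination (norm := module) hr)
  norm_num at this

/-! ### Uniform bounds by compactness -/

lemma exists_dist_bound {e : Fin 3 → E} (he : Orthonormal ℝ e) (M : ℝ) :
    ∃ δ : ℝ, 0 < δ ∧ ∀ s ∈ Set.Icc (1 : ℝ) M, ∀ t ∈ Set.Icc (1 : ℝ) M, 1 / 2 ≤ |s - t| →
      δ ≤ ‖sphCurve e s - sphCurve e t‖ := by
  have hcont := continuous_sphCurve e
  let K : Set (ℝ × ℝ) := (Set.Icc 1 M ×ˢ Set.Icc 1 M) ∩ {x | 1 / 2 ≤ |x.1 - x.2|}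
  have hK : IsCompact K :=
    (isCompact_Icc.prod isCompact_Icc).inter_right (isClosed_le (by fun_prop) (by fun_prop))
  obtain ⟨δ, hδ, h⟩ := hK.exists_forall_le' (f := fun x => ‖sphCurve e x.1 - sphCurve e x.2‖)
    (by fun_prop) (a := 0) (by
      rintro ⟨s, t⟩ ⟨⟨hs, ht⟩, hst⟩
      refine norm_pos_iff.2 (sub_ne_zero.2 (sphCurve_ne he (by linarith [hs.1])
        (by linarith [ht.1]) fun h : s = t => ?_))
      simp only [Set.mem_ofPred_eq, h] at hst
      norm_num at hst)
  exact ⟨δ, hδ, fun s hs t ht hst => h (s, t) ⟨⟨hs, ht⟩, hst⟩⟩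

lemma exists_angle_bound {e : Fin 3 → E} (he : Orthonormal ℝ e) (M : ℝ) :
    ∃ δ : ℝ, 0 < δ ∧ ∀ r ∈ Set.Icc (1 : ℝ) M, ∀ s ∈ Set.Icc (1 : ℝ) M, ∀ t ∈ Set.Icc (1 : ℝ) M,
      1 / 2 ≤ |r - s| → 1 / 2 ≤ |r - t| → 1 / 2 ≤ |s - t| →
      δ ≤ angle (sphCurve e s - sphCurve e r) (sphCurve e t - sphCurve e r) := by
  have hcont := continuous_sphCurve e
  let K : Set (ℝ × ℝ × ℝ) := (Set.Icc 1 M ×ˢ Set.Icc 1 M ×ˢ Set.Icc 1 M) ∩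
    ({x | 1 / 2 ≤ |x.1 - x.2.1|} ∩ ({x | 1 / 2 ≤ |x.1 - x.2.2|} ∩ {x | 1 / 2 ≤ |x.2.1 - x.2.2|}))
  have hK : IsCompact K := by
    refine (isCompact_Icc.prod (isCompact_Icc.prod isCompact_Icc)).inter_right
      (IsClosed.inter ?_ (IsClosed.inter ?_ ?_)) <;>
    exact isClosed_le (by fun_prop) (by fun_prop)
  have hne : ∀ x y : ℝ, 1 / 2 ≤ |x - y| → x ≠ y := by
    rintro x y h rfl
    norm_num at h
  obtain ⟨δ, hδ, h⟩ := hK.exists_forall_le' (a := 0)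
    (f := fun x => angle (sphCurve e x.2.1 - sphCurve e x.1) (sphCurve e x.2.2 - sphCurve e x.1))
    (by
      rintro ⟨r, s, t⟩ ⟨⟨hr, hs, ht⟩, hrs, hrt, hst⟩
      have hr0 : 0 < r := by linarith [hr.1]
      have hs0 : 0 < s := by linarith [hs.1]
      have ht0 : 0 < t := by linarith [ht.1]
      refine ContinuousAt.continuousWithinAt ?_
      have hang := continuousAt_angle
        (x := (sphCurve e s - sphCurve e r, sphCurve e t - sphCurve e r))
        (sub_ne_zero.2 (sphCurve_ne he hs0 hr0 (hne _ _ hrs).symm))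
        (sub_ne_zero.2 (sphCurve_ne he ht0 hr0 (hne _ _ hrt).symm))
      exact ContinuousAt.comp (x := (r, s, t))
        (f := fun x : ℝ × ℝ × ℝ =>
          (sphCurve e x.2.1 - sphCurve e x.1, sphCurve e x.2.2 - sphCurve e x.1))
        hang (by fun_prop)) (by
      rintro ⟨r, s, t⟩ ⟨⟨hr, hs, ht⟩, hrs, hrt, hst⟩
      exact angle_sphCurve_pos he (by linarith [ht.1]) (by linarith [hs.1]) (by linarith [hr.1])
        (hne _ _ hst).symm (hne _ _ hrt).symm)
  exact ⟨δ, hδ, fun r hr s hs t ht h1 h2 h3 => h (r, s, t) ⟨⟨hr, hs, ht⟩, h1, h2, h3⟩⟩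

end Curve

/-! ### Separated parameters from a colouring -/

/-- Greedy colouring: a symmetric relation with at most `d` neighbours per vertex admits a proper
colouring by `0, …, d`. -/
lemma exists_greedy_coloring {W : Type*} [Fintype W] [DecidableEq W] (r : W → W → Prop)
    [DecidableRel r] (hr : ∀ u v, r u v → r v u) (d : ℕ)
    (hd : ∀ u, (Finset.univ.filter (r u)).card ≤ d) :
    ∃ c : W → ℕ, (∀ u, c u ≤ d) ∧ ∀ u v, u ≠ v → r u v → c u ≠ c v := by
  suffices h : ∀ S : Finset W, ∃ c : W → ℕ, (∀ u, c u ≤ d) ∧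
      ∀ u ∈ S, ∀ v ∈ S, u ≠ v → r u v → c u ≠ c v by
    obtain ⟨c, h1, h2⟩ := h Finset.univ
    exact ⟨c, h1, fun u v => h2 u (Finset.mem_univ _) v (Finset.mem_univ _)⟩
  intro S
  induction S using Finset.induction_on with
  | empty => exact ⟨fun _ => 0, by simp, by simp⟩
  | insert a S ha ih =>
    obtain ⟨c, h1, h2⟩ := ih
    obtain ⟨k, hk, hk'⟩ : ∃ k ∈ Finset.range (d + 1),
        k ∉ (Finset.univ.filter (r a)).image c := by
      refine Finset.exists_mem_notMem_of_card_lt_card ?_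
      rw [Finset.card_range]
      exact Nat.lt_succ_of_le (Finset.card_image_le.trans (hd a))
    have hfree : ∀ v, r a v → c v ≠ k := fun v hv he =>
      hk' (Finset.mem_image.2 ⟨v, by simpa using hv, he⟩)
    refine ⟨Function.update c a k, fun u => ?_, fun u hu v hv huv huv' => ?_⟩
    · rcases eq_or_ne u a with rfl | hne
      · simpa [Nat.lt_succ_iff] using hk
      · simpa [hne] using h1 u
    · rcases eq_or_ne u a with rfl | hua
      · simpa [huv.symm] using (hfree v huv').symm
      · rcases eq_or_ne v a with rfl | hva
        · simpa [huv] using hfree u (hr _ _ huv')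
        · simpa [hua, hva] using h2 u (Finset.mem_of_mem_insert_of_ne hu hua) v
            (Finset.mem_of_mem_insert_of_ne hv hva) huv huv'

lemma exists_bounded_coloring {W : Type*} [Fintype W] (G : SimpleGraph W) [DecidableRel G.Adj]
    (L : ℕ) (hL : ∀ v, G.degree v ≤ L) :
    ∃ c : W → ℕ, (∀ u, c u ≤ L + L * L) ∧
      ∀ u v, u ≠ v → (G.Adj u v ∨ ∃ w, G.Adj u w ∧ G.Adj w v) → c u ≠ c v := by
  classical
  refine exists_greedy_coloring _ ?_ _ fun u => ?_
  · rintro u v (h | ⟨w, h1, h2⟩)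
    · exact Or.inl h.symm
    · exact Or.inr ⟨w, h2.symm, h1.symm⟩
  · calc _ ≤ (G.neighborFinset u ∪ (G.neighborFinset u).biUnion fun v => G.neighborFinset v).card := by
          refine Finset.card_le_card fun v hv => ?_
          simpa using hv
      _ ≤ _ := Finset.card_union_le _ _
      _ ≤ L + L * L := by
          refine add_le_add (hL u) ?_
          refine (Finset.card_biUnion_le_card_mul _ _ L fun v _ => hL v).trans ?_
          exact Nat.mul_le_mul_right _ (hL u)

/-- Each colour `k` is spread injectively over parameters in `(k + 1, k + 3 / 2]`. -/
lemma exists_parameters {W : Type*} [Fintype W] (G : SimpleGraph W) [DecidableRel G.Adj]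
    (L : ℕ) (hL : ∀ v, G.degree v ≤ L) :
    ∃ t : W → ℝ, (∀ u, t u ∈ Set.Icc (1 : ℝ) (L + L * L + 2)) ∧ Function.Injective t ∧
      ∀ u v, u ≠ v → (G.Adj u v ∨ ∃ w, G.Adj u w ∧ G.Adj w v) → 1 / 2 ≤ |t u - t v| := by
  obtain ⟨c, hc, hcol⟩ := exists_bounded_coloring G L hL
  let i := Fintype.equivFin W
  let ε : W → ℝ := fun u => 1 / (2 * ((i u : ℕ) + 1 : ℝ))
  have hε0 : ∀ u, 0 < ε u := fun u => by positivity
  have hε1 : ∀ u, ε u ≤ 1 / 2 := fun u => by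
    have : (0 : ℝ) ≤ (i u : ℕ) := Nat.cast_nonneg _
    exact one_div_le_one_div_of_le (by norm_num) (by linarith)
  have hεi : ∀ u v, ε u = ε v → u = v := fun u v h => by
    have h' : (2 * ((i u : ℕ) + 1 : ℝ)) = 2 * ((i v : ℕ) + 1 : ℝ) := by
      simpa only [ε, one_div, inv_inj] using h
    have h'' : ((i u : ℕ) : ℝ) = (i v : ℕ) := by linarith
    exact i.injective (Fin.ext (Nat.cast_injective h''))
  have hsep : ∀ u v, c u < c v → (1 : ℝ) / 2 ≤ (c v + 1 + ε v) - (c u + 1 + ε u) := by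
    intro u v h
    have h' : (c u : ℝ) + 1 ≤ c v := by exact_mod_cast h
    linarith [hε0 v, hε1 u]
  have hsep' : ∀ u v, c u ≠ c v → (1 : ℝ) / 2 ≤ |(c u + 1 + ε u) - (c v + 1 + ε v)| := by
    intro u v h
    rcases lt_or_gt_of_ne h with h | h
    · rw [abs_sub_comm]
      exact (hsep u v h).trans (le_abs_self _)
    · exact (hsep v u h).trans (le_abs_self _)
  refine ⟨fun u => c u + 1 + ε u, fun u => ⟨?_, ?_⟩, fun u v h => ?_, fun u v huv h => ?_⟩
  · have : (0 : ℝ) ≤ c u := Nat.cast_nonneg _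
    linarith [hε0 u]
  · have : (c u : ℝ) ≤ L + L * L := by exact_mod_cast hc u
    linarith [hε1 u]
  · by_cases hcc : c u = c v
    · simp only [hcc, add_right_inj] at h
      exact hεi u v h
    · have h1 := hsep' u v hcc
      have h2 : (c u + 1 + ε u : ℝ) = c v + 1 + ε v := h
      rw [h2] at h1
      norm_num at h1
  · exact hsep' u v (hcol u v huv h)

/-! ### The embedding -/

/-- **Vertex assignments on a sphere with separation, thick links, and linear
embedding.**  For all `n ≥ 3` and `L ≥ 1` there is `α₀ = α₀(n,L) > 0` such that for
every finite simple graph `G` with maximum degree at most `L` and every `R ≥ 1` there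
is a map `f` from the vertices of `G` to the sphere of radius `R` in `ℝⁿ` with:
(i) vertices at graph distance at most `2` are mapped at least `α₀·R` apart;
(ii) for every vertex `v` and distinct neighbors `u, w`, the angle between
`f(u) − f(v)` and `f(w) − f(v)` is at least `α₀`; and (iii) the linear extension is an
embedding: segments of vertex-disjoint edges are disjoint, and no vertex image lies on
the segment of an edge not containing it. -/
theorem exists_thick_vertex_assignment (n L : ℕ) (hn : 3 ≤ n) (hL : 1 ≤ L) :
    ∃ α₀ : ℝ, 0 < α₀ ∧
      ∀ (W : Type) [Fintype W] (G : SimpleGraph W) [DecidableRel G.Adj],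
        (∀ v : W, G.degree v ≤ L) →
        ∀ R : ℝ, 1 ≤ R →
        ∃ f : W → EuclideanSpace ℝ (Fin n),
          (∀ v, f v ∈ Metric.sphere (0 : EuclideanSpace ℝ (Fin n)) R) ∧
          -- (i) separation at graph distance ≤ 2
          (∀ u v : W, u ≠ v →
            (G.Adj u v ∨ ∃ w, G.Adj u w ∧ G.Adj w v) →
            α₀ * R ≤ ‖f u - f v‖) ∧
          -- (ii) thick links: angles at each vertex are at least α₀
          (∀ v u w : W, G.Adj v u → G.Adj v w → u ≠ w →
            α₀ ≤ angle (f u - f v) (f w - f v)) ∧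
          -- (iii) the linear extension is an embedding
          (∀ u v x y : W, G.Adj u v → G.Adj x y →
            u ≠ x → u ≠ y → v ≠ x → v ≠ y →
            Disjoint (segment ℝ (f u) (f v)) (segment ℝ (f x) (f y))) ∧
          (∀ z u v : W, G.Adj u v → z ≠ u → z ≠ v →
            f z ∉ segment ℝ (f u) (f v)) := by
  let e : Fin 3 → EuclideanSpace ℝ (Fin n) :=
    fun i => EuclideanSpace.basisFun (Fin n) ℝ (Fin.castLE hn i)
  have he : Orthonormal ℝ e :=
    (EuclideanSpace.basisFun (Fin n) ℝ).orthonormal.comp _ (Fin.castLE_injective hn)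
  obtain ⟨δ₁, hδ₁, hdist⟩ := exists_dist_bound he (L + L * L + 2)
  obtain ⟨δ₂, hδ₂, hangle⟩ := exists_angle_bound he (L + L * L + 2)
  refine ⟨min δ₁ δ₂, lt_min hδ₁ hδ₂, ?_⟩
  intro W _ G _ hdeg R hR
  have hR0 : 0 < R := by linarith
  obtain ⟨t, htI, htinj, htsep⟩ := exists_parameters G L hdeg
  have ht0 : ∀ u, 0 < t u := fun u => by linarith [(htI u).1]
  refine ⟨fun u => R • sphCurve e (t u), fun v => ?_, fun u v huv h => ?_,
    fun v u w hu hw huw => ?_, fun u v x y huv hxy hux huy hvx hvy => ?_,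
    fun z u v huv hzu hzv => ?_⟩
  · simp [norm_smul, norm_sphCurve he, abs_of_pos hR0]
  · rw [← smul_sub, norm_smul, Real.norm_of_nonneg hR0.le, mul_comm]
    exact mul_le_mul_of_nonneg_left ((min_le_left _ _).trans
      (hdist _ (htI u) _ (htI v) (htsep u v huv h))) hR0.le
  · simp only [← smul_sub]
    rw [angle_smul_left_of_pos _ _ hR0, angle_smul_right_of_pos _ _ hR0]
    exact (min_le_right _ _).trans (hangle _ (htI v) _ (htI u) _ (htI w)
      (htsep v u hu.ne (Or.inl hu)) (htsep v w hw.ne (Or.inl hw))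
      (htsep u w huw (Or.inr ⟨v, hu.symm, hw⟩)))
  · rw [Set.disjoint_left]
    rintro _ ⟨a, b, -, -, hab, rfl⟩ ⟨c, d, -, -, hcd, h⟩
    have h' : c • sphCurve e (t x) + d • sphCurve e (t y) =
        a • sphCurve e (t u) + b • sphCurve e (t v) := by
      refine smul_right_injective _ hR0.ne' ?_
      simp only [smul_add, smul_comm R]
      exact h
    have ha : a = 0 := curve_weight_eq_zero he (q := b) (r := -c) (s := -d)
      (ht0 u) (ht0 v) (ht0 x) (ht0 y) (htinj.ne huv.ne) (htinj.ne hux) (htinj.ne huy)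
      (by linarith) (by linear_combination (norm := module) -h')
    have hb : b = 0 := curve_weight_eq_zero he (q := a) (r := -c) (s := -d)
      (ht0 v) (ht0 u) (ht0 x) (ht0 y) (htinj.ne huv.ne') (htinj.ne hvx) (htinj.ne hvy)
      (by linarith) (by linear_combination (norm := module) -h')
    linarith
  · rintro ⟨a, b, -, -, hab, h⟩
    have h' : a • sphCurve e (t u) + b • sphCurve e (t v) = sphCurve e (t z) := by
      refine smul_right_injective _ hR0.ne' ?_
      simp only [smul_add, smul_comm R]
      exact h
    have := curve_weight_eq_zero_three he (p := 1) (q := -a) (r := -b)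
      (ht0 z) (ht0 u) (ht0 v) (htinj.ne hzu) (htinj.ne hzv)
      (by linarith) (by linear_combination (norm := module) -h')
    norm_num at this
end
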